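/- arXiv:1701.07682 — 2 statements merged into one kernel-verified Lean document; each statement's English description precedes it below -/
import Mathlib

section
/- Let n ≥ 1 be a natural number and set c_5² = 1/(4(2λ+1)²(2λ+5)). If λ ≥ 0, then c_5²·(n+8)n³(n+λ)²(n+2λ)² ≤ ‖B_n‖_F² ≤ c_5²·(n+2λ+2)⁸. If -1/2 < λ ≤ 0, then c_5²·(n+2λ+8)n²(n+λ)²(n+2λ)³ ≤ ‖B_n‖_F² ≤ c_5²·(n+λ+2)⁸. -/
/-- `h_x^2 = Γ(x+2λ)/((x+λ)Γ(x+1))`. -/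
noncomputable def hsq (lam x : ℝ) : ℝ :=
  Real.Gamma (x + 2*lam) / ((x + lam) * Real.Gamma (x + 1))

/-- `α_k = (2k-1+λ) h_{2k-1}`. -/
noncomputable def gegAlpha (lam : ℝ) (k : ℕ) : ℝ :=
  (2*(k:ℝ) - 1 + lam) * Real.sqrt (hsq lam (2*(k:ℝ) - 1))

/-- `β_k = 1/h_{2k}`. -/
noncomputable def gegBeta (lam : ℝ) (k : ℕ) : ℝ :=
  1 / Real.sqrt (hsq lam (2*(k:ℝ)))

/-- `α̃_k^2 = ((2k-2+λ) h_{2k-2})^2`, with `α̃_1^2 = λΓ(2λ) = Γ(2λ+1)/2`. -/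
noncomputable def gegAlphaTildeSq (lam : ℝ) (k : ℕ) : ℝ :=
  if k = 1 then Real.Gamma (2*lam + 1) / 2
  else (2*(k:ℝ) - 2 + lam)^2 * hsq lam (2*(k:ℝ) - 2)

/-- `β̃_k = 1/h_{2k-1}`. -/
noncomputable def gegBetaTilde (lam : ℝ) (k : ℕ) : ℝ :=
  1 / Real.sqrt (hsq lam (2*(k:ℝ) - 1))

/-- The matrix `A_m` with entries `a_{kj} = (Σ_{i=1}^{min(k,j)} α_i^2) β_k β_j` (1-based). -/
noncomputable def Amat (lam : ℝ) (m : ℕ) : Matrix (Fin m) (Fin m) ℝ :=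
  fun k j => (∑ i ∈ Finset.Icc 1 (min (k.val+1) (j.val+1)), (gegAlpha lam i)^2) *
    gegBeta lam (k.val+1) * gegBeta lam (j.val+1)

/-- The matrix `Ã_m` with entries `ã_{kj} = (Σ_{i=1}^{min(k,j)} α̃_i^2) β̃_k β̃_j` (1-based). -/
noncomputable def AmatTilde (lam : ℝ) (m : ℕ) : Matrix (Fin m) (Fin m) ℝ :=
  fun k j => (∑ i ∈ Finset.Icc 1 (min (k.val+1) (j.val+1)), gegAlphaTildeSq lam i) *
    gegBetaTilde lam (k.val+1) * gegBetaTilde lam (j.val+1)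

/-- `B_n = 4 A_m` for `n = 2m` and `B_n = 4 Ã_m` for `n = 2m-1`; in both cases `m = (n+1)/2`. -/
noncomputable def Bmat (lam : ℝ) (n : ℕ) : Matrix (Fin ((n+1)/2)) (Fin ((n+1)/2)) ℝ :=
  if n % 2 = 0 then (4:ℝ) • Amat lam ((n+1)/2) else (4:ℝ) • AmatTilde lam ((n+1)/2)

/-- Maximum absolute row-sum norm. -/
noncomputable def rowSumNorm {m : ℕ} (A : Matrix (Fin m) (Fin m) ℝ) : ℝ :=
  ⨆ k, ∑ j, |A k j|

/-- Squared Frobenius norm. -/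
noncomputable def frobSq {m : ℕ} (A : Matrix (Fin m) (Fin m) ℝ) : ℝ :=
  ∑ k, ∑ j, (A k j)^2

/-! Index the `k`-th row by its node `x = 2k` (for `A_m`) or `x = 2k - 1` (for `Ã_m`). The sum of
`α_i²` or `α̃_i²` up to node `x` is `d(x) h_x²` in both cases, where `d(x) = x(x+λ)(x+2λ) /
(2(2λ+1))`. Hence the diagonal entry at node `x` is `d(x)`, and the squares of the entries above
it add up to a polynomial `a(x)`, again by telescoping in steps of two. Bordering `B_{n-2}` to get
`B_n` therefore adds `16(d(n)² + 2a(n))` to the squared Frobenius norm. This is `c₅²(P(n) -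
P(n-2))` for an explicit polynomial `P` with `P(0) = 0`, so that `‖B_n‖_F² = c₅²(P(n) - P(-ε))`
exactly, where `ε ∈ {0, 1}` is the parity of `n`. What remains are polynomial inequalities in `n`
and `λ`: after substitutions that make both parameters range over `[0, ∞)` and clearing of
denominators, the differences of the two sides have nonnegative coefficients. -/

open Finset

section Frobenius

/-- The matrix with entries `S (min k j) * β k * β j`, the common shape of `A_m` and `Ã_m`;
indices start at `0`. -/
def minKernel (S β : ℕ → ℝ) (m : ℕ) : Matrix (Fin m) (Fin m) ℝ :=
  fun k j => S (min (k : ℕ) j) * β k * β j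

lemma frobSq_smul {m : ℕ} (c : ℝ) (A : Matrix (Fin m) (Fin m) ℝ) :
    frobSq (c • A) = c ^ 2 * frobSq A := by
  simp only [frobSq, Matrix.smul_apply, smul_eq_mul, mul_pow, mul_sum]

lemma frobSq_minKernel_succ (S β : ℕ → ℝ) (m : ℕ) :
    frobSq (minKernel S β (m + 1)) = frobSq (minKernel S β m) +
      ((S m * β m ^ 2) ^ 2 + 2 * (β m ^ 2 * ∑ j ∈ range m, S j ^ 2 * β j ^ 2)) := by
  have min_last (j : Fin m) : min (j : ℕ) m = j := min_eq_left j.2.le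
  have last_min (j : Fin m) : min m (j : ℕ) = j := min_eq_right j.2.le
  have last_column : ∑ j : Fin m, (S j * β j * β m) ^ 2 =
      β m ^ 2 * ∑ j : Fin m, S j ^ 2 * β j ^ 2 := by
    rw [mul_sum]
    exact sum_congr rfl fun j _ => by ring
  have last_row : ∑ j : Fin m, (S j * β m * β j) ^ 2 =
      β m ^ 2 * ∑ j : Fin m, S j ^ 2 * β j ^ 2 := by
    rw [mul_sum]
    exact sum_congr rfl fun j _ => by ring
  simp only [frobSq, minKernel, Fin.sum_univ_castSucc, Fin.val_castSucc, Fin.val_last,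
    sum_add_distrib, min_last, last_min, min_self, last_column, last_row,
    ← Fin.sum_univ_eq_sum_range]
  ring

end Frobenius

section Nodes

/-- `d(x)`, the diagonal entry of `A_m` or `Ã_m` at node `x`. -/
noncomputable def diagEntry (lam x : ℝ) : ℝ :=
  x * (x + lam) * (x + 2 * lam) / (2 * (2 * lam + 1))

/-- `a(x)`, the sum of the squares of the entries of `A_m` or `Ã_m` strictly above the diagonal in
the column of node `x`. -/
noncomputable def aboveDiagSqSum (lam x : ℝ) : ℝ :=
  diagEntry lam x * ((x - 1) * (x - 2) * ((x - 2) * (x + 2 * lam) - 4 / (2 * lam + 3))) /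
    (4 * (2 * lam + 1) * (2 * lam + 5))

/-- The matrix with nodes `e, e + 2, …, e + 2(m - 1)`: it is `A_m` for `e = 2` and `Ã_m` for
`e = 1`. -/
noncomputable def nodeKernel (lam e : ℝ) (m : ℕ) : Matrix (Fin m) (Fin m) ℝ :=
  minKernel (fun k => diagEntry lam (2 * k + e) * hsq lam (2 * k + e))
    (fun k => 1 / √(hsq lam (2 * k + e))) m

variable {lam x : ℝ}

lemma hsq_pos (hl : -(1 / 2) < lam) (hx : 1 ≤ x) : 0 < hsq lam x := by
  have := Real.Gamma_pos_of_pos (show 0 < x + 2 * lam by linarith)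
  have := Real.Gamma_pos_of_pos (show 0 < x + 1 by linarith)
  have : 0 < x + lam := by linarith
  unfold hsq
  positivity

lemma hsq_add_one (hl : -(1 / 2) < lam) (hx : 1 ≤ x) :
    hsq lam (x + 1) =
      (x + lam) * (x + 2 * lam) / ((x + 1) * (x + 1 + lam)) * hsq lam x := by
  have hxl : x + lam ≠ 0 := by linarith
  have hxl' : x + 1 + lam ≠ 0 := by linarith
  have hx2l : x + 2 * lam ≠ 0 := by linarith
  have hx1 : x + 1 ≠ 0 := by linarith
  have hG : Real.Gamma (x + 1) ≠ 0 := (Real.Gamma_pos_of_pos (by linarith)).ne'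
  rw [hsq, hsq, add_right_comm x 1, Real.Gamma_add_one hx2l, Real.Gamma_add_one hx1]
  field_simp

lemma hsq_add_two (hl : -(1 / 2) < lam) (hx : 1 ≤ x) :
    hsq lam (x + 2) =
      (x + 1 + lam) * (x + 1 + 2 * lam) / ((x + 2) * (x + 2 + lam)) * hsq lam (x + 1) := by
  have h := hsq_add_one hl (x := x + 1) (by linarith)
  rwa [add_assoc x 1 1, one_add_one_eq_two] at h

lemma diagEntry_mul_hsq_add_two (hl : -(1 / 2) < lam) (hx : 1 ≤ x) :
    diagEntry lam (x + 2) * hsq lam (x + 2) =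
      diagEntry lam x * hsq lam x + (x + 1 + lam) ^ 2 * hsq lam (x + 1) := by
  have hx1 : x + 1 ≠ 0 := by linarith
  have hx2 : x + 2 ≠ 0 := by linarith
  have hxl1 : x + 1 + lam ≠ 0 := by linarith
  have hxl2 : x + 2 + lam ≠ 0 := by linarith
  have hl1 : 2 * lam + 1 ≠ 0 := by linarith
  rw [hsq_add_two hl hx, hsq_add_one hl hx, diagEntry, diagEntry]
  field_simp
  ring

lemma aboveDiagSqSum_mul_hsq_add_two (hl : -(1 / 2) < lam) (hx : 1 ≤ x) :
    aboveDiagSqSum lam (x + 2) * hsq lam (x + 2) =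
      aboveDiagSqSum lam x * hsq lam x + diagEntry lam x ^ 2 * hsq lam x := by
  have hx1 : x + 1 ≠ 0 := by linarith
  have hx2 : x + 2 ≠ 0 := by linarith
  have hxl1 : x + 1 + lam ≠ 0 := by linarith
  have hxl2 : x + 2 + lam ≠ 0 := by linarith
  have hl1 : 2 * lam + 1 ≠ 0 := by linarith
  have hl3 : 2 * lam + 3 ≠ 0 := by linarith
  have hl5 : 2 * lam + 5 ≠ 0 := by linarith
  rw [hsq_add_two hl hx, hsq_add_one hl hx, aboveDiagSqSum, aboveDiagSqSum, diagEntry, diagEntry]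
  field_simp
  ring

lemma sum_sq_gegAlpha (hl : -(1 / 2) < lam) (m : ℕ) :
    ∑ i ∈ Icc 1 (m + 1), gegAlpha lam i ^ 2 =
      diagEntry lam (2 * m + 2) * hsq lam (2 * m + 2) := by
  have gegAlpha_sq (k : ℕ) :
      gegAlpha lam (k + 1) ^ 2 = (2 * k + 1 + lam) ^ 2 * hsq lam (2 * k + 1) := by
    have hnode : 2 * ((k + 1 : ℕ) : ℝ) - 1 = 2 * k + 1 := by push_cast; ring
    have hk : (1 : ℝ) ≤ 2 * k + 1 := by linarith [k.cast_nonneg (α := ℝ)]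
    rw [gegAlpha, hnode, mul_pow, Real.sq_sqrt (hsq_pos hl hk).le]
  induction m with
  | zero =>
    have hl1 : lam * 2 + 1 ≠ 0 := by linarith
    have hl2 : 2 + lam ≠ 0 := by linarith
    have hsq_two := hsq_add_one hl (le_refl 1)
    rw [one_add_one_eq_two, add_comm 1 (2 * lam)] at hsq_two
    rw [Icc_self, sum_singleton, gegAlpha_sq]
    simp only [Nat.cast_zero, mul_zero, zero_add, hsq_two, diagEntry]
    field_simp
  | succ m ih =>
    have hm : (1 : ℝ) ≤ 2 * m + 2 := by linarith [m.cast_nonneg (α := ℝ)]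
    have hnode : 2 * ((m + 1 : ℕ) : ℝ) + 2 = 2 * m + 2 + 2 := by push_cast; ring
    have hmid : 2 * ((m + 1 : ℕ) : ℝ) + 1 = 2 * m + 2 + 1 := by push_cast; ring
    rw [sum_Icc_succ_top (by omega), ih, gegAlpha_sq, hnode, hmid,
      diagEntry_mul_hsq_add_two hl hm]

lemma sum_gegAlphaTildeSq (hl : -(1 / 2) < lam) (m : ℕ) :
    ∑ i ∈ Icc 1 (m + 1), gegAlphaTildeSq lam i =
      diagEntry lam (2 * m + 1) * hsq lam (2 * m + 1) := by
  induction m with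
  | zero =>
    have hl1 : 2 * lam + 1 ≠ 0 := by linarith
    have hl1' : 1 + lam ≠ 0 := by linarith
    simp only [zero_add, Icc_self, sum_singleton, gegAlphaTildeSq, if_true, Nat.cast_zero, mul_zero,
      diagEntry, hsq, one_add_one_eq_two, Real.Gamma_two, add_comm 1 (2 * lam)]
    field_simp
  | succ m ih =>
    have hm : (1 : ℝ) ≤ 2 * m + 1 := by linarith [m.cast_nonneg (α := ℝ)]
    have hnode : 2 * ((m + 1 : ℕ) : ℝ) + 1 = 2 * m + 1 + 2 := by push_cast; ring
    have hmid : 2 * ((m + 1 + 1 : ℕ) : ℝ) - 2 = 2 * m + 1 + 1 := by push_cast; ring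
    rw [sum_Icc_succ_top (by omega), ih, gegAlphaTildeSq, if_neg (by omega), hnode, hmid,
      diagEntry_mul_hsq_add_two hl hm]

lemma Amat_eq_nodeKernel (hl : -(1 / 2) < lam) (m : ℕ) : Amat lam m = nodeKernel lam 2 m := by
  ext k j
  simp only [Amat, nodeKernel, minKernel, gegBeta, min_add_add_right, sum_sq_gegAlpha hl,
    Nat.cast_add_one, mul_add_one]

lemma AmatTilde_eq_nodeKernel (hl : -(1 / 2) < lam) (m : ℕ) :
    AmatTilde lam m = nodeKernel lam 1 m := by
  have hnode (k : ℕ) : 2 * ((k + 1 : ℕ) : ℝ) - 1 = 2 * k + 1 := by push_cast; ring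
  ext k j
  simp only [AmatTilde, nodeKernel, minKernel, gegBetaTilde, min_add_add_right,
    sum_gegAlphaTildeSq hl, hnode]

end Nodes

section ExactNorm

/-- `P(x)`, the polynomial in `x` for which `P(n) - P(n-2)` is `4(2λ+1)²(2λ+5)` times
`‖B_n‖_F² - ‖B_{n-2}‖_F²`, normalized by `P(0) = 0`. -/
noncomputable def frobPoly (lam x : ℝ) : ℝ :=
  let u := x * (x + 2 * lam + 2)
  u * (u + 4 * lam) * (u ^ 2 + 8 * (lam + 2) / (3 * (2 * lam + 3)) *
    ((2 * lam ^ 2 + 7 * lam + 2) * u + (2 * lam + 1) * (2 * lam ^ 2 + lam - 7)))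

variable {lam : ℝ}

lemma frobPoly_sub_frobPoly (hl : -(1 / 2) < lam) (x : ℝ) :
    frobPoly lam x - frobPoly lam (x - 2) =
      64 * (2 * lam + 1) ^ 2 * (2 * lam + 5) *
        (diagEntry lam x ^ 2 + 2 * aboveDiagSqSum lam x) := by
  have hl1 : 2 * lam + 1 ≠ 0 := by linarith
  have hl3 : 2 * lam + 3 ≠ 0 := by linarith
  have hl5 : 2 * lam + 5 ≠ 0 := by linarith
  simp only [frobPoly, aboveDiagSqSum, diagEntry]
  field_simp
  ring

lemma sum_diagEntry_sq_mul_hsq (hl : -(1 / 2) < lam) {e : ℝ} (he : e = 1 ∨ e = 2) (m : ℕ) :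
    ∑ j ∈ range m, diagEntry lam (2 * j + e) ^ 2 * hsq lam (2 * j + e) =
      aboveDiagSqSum lam (2 * m + e) * hsq lam (2 * m + e) := by
  induction m with
  | zero => rcases he with rfl | rfl <;> simp [aboveDiagSqSum]
  | succ m ih =>
    have hm : 1 ≤ 2 * m + e := by rcases he with rfl | rfl <;> linarith [m.cast_nonneg (α := ℝ)]
    have hnode : 2 * ((m + 1 : ℕ) : ℝ) + e = 2 * m + e + 2 := by push_cast; ring
    rw [sum_range_succ, ih, hnode, aboveDiagSqSum_mul_hsq_add_two hl hm]

lemma frobSq_nodeKernel_succ (hl : -(1 / 2) < lam) {e : ℝ} (he : e = 1 ∨ e = 2) (m : ℕ) :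
    frobSq (nodeKernel lam e (m + 1)) = frobSq (nodeKernel lam e m) +
      (diagEntry lam (2 * m + e) ^ 2 + 2 * aboveDiagSqSum lam (2 * m + e)) := by
  have hpos (j : ℕ) : 0 < hsq lam (2 * j + e) :=
    hsq_pos hl (by rcases he with rfl | rfl <;> linarith [j.cast_nonneg (α := ℝ)])
  have hβ (j : ℕ) : (1 / √(hsq lam (2 * j + e))) ^ 2 = 1 / hsq lam (2 * j + e) := by
    rw [div_pow, one_pow, Real.sq_sqrt (hpos j).le]
  have hterm (j : ℕ) : (diagEntry lam (2 * j + e) * hsq lam (2 * j + e)) ^ 2 *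
      (1 / hsq lam (2 * j + e)) = diagEntry lam (2 * j + e) ^ 2 * hsq lam (2 * j + e) := by
    have := (hpos j).ne'
    field_simp
  have := (hpos m).ne'
  simp only [nodeKernel, frobSq_minKernel_succ, hβ, hterm, sum_diagEntry_sq_mul_hsq hl he]
  field_simp

lemma frobSq_nodeKernel (hl : -(1 / 2) < lam) {e : ℝ} (he : e = 1 ∨ e = 2) (m : ℕ) :
    64 * (2 * lam + 1) ^ 2 * (2 * lam + 5) * frobSq (nodeKernel lam e m) =
      frobPoly lam (2 * m + e - 2) - frobPoly lam (e - 2) := by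
  induction m with
  | zero => simp [frobSq]
  | succ m ih =>
    have hnode : 2 * ((m + 1 : ℕ) : ℝ) + e - 2 = 2 * m + e := by push_cast; ring
    rw [frobSq_nodeKernel_succ hl he, mul_add, ih, ← frobPoly_sub_frobPoly hl, hnode]
    ring

lemma frobSq_Bmat (hl : -(1 / 2) < lam) (n : ℕ) :
    frobSq (Bmat lam n) = 1 / (4 * (2 * lam + 1) ^ 2 * (2 * lam + 5)) *
      (frobPoly lam n - frobPoly lam (-(n % 2 : ℕ))) := by
  have hl1 : 2 * lam + 1 ≠ 0 := by linarith
  have hl5 : 2 * lam + 5 ≠ 0 := by linarith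
  rw [one_div_mul_eq_div, eq_div_iff (by positivity)]
  rcases Nat.even_or_odd' n with ⟨m, rfl | rfl⟩
  · have h := frobSq_nodeKernel hl (Or.inr rfl) m
    rw [Bmat, if_pos (by omega), frobSq_smul, Amat_eq_nodeKernel hl,
      show (2 * m + 1) / 2 = m by omega, show 2 * m % 2 = 0 by omega]
    push_cast
    simp only [add_sub_cancel_right, sub_self, neg_zero] at h ⊢
    linarith
  · have h := frobSq_nodeKernel hl (Or.inl rfl) (m + 1)
    rw [Bmat, if_neg (by omega), frobSq_smul, AmatTilde_eq_nodeKernel hl,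
      show (2 * m + 1 + 1) / 2 = m + 1 by omega, show (2 * m + 1) % 2 = 1 by omega]
    push_cast at h ⊢
    rw [show 2 * ((m : ℝ) + 1) + 1 - 2 = 2 * m + 1 by ring, show (1 : ℝ) - 2 = -1 by norm_num] at h
    linarith

end ExactNorm

section PolynomialBounds

variable {lam x r : ℝ}

lemma le_frobPoly_sub_of_nonneg (hl : 0 ≤ lam) (hr : r = 0 ∨ r = -1) (hx : r + 2 ≤ x) :
    (x + 8) * x ^ 3 * (x + lam) ^ 2 * (x + 2 * lam) ^ 2 ≤ frobPoly lam x - frobPoly lam r := by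
  obtain ⟨w, hw, rfl⟩ := exists_nonneg_add_of_le hx
  rw [← sub_nonneg]
  rcases hr with rfl | rfl <;> simp only [frobPoly] <;> field_simp <;> ring_nf <;> positivity

lemma frobPoly_sub_le_of_nonneg (hl : 0 ≤ lam) (hr : r = 0 ∨ r = -1) (hx : 0 ≤ x) :
    frobPoly lam x - frobPoly lam r ≤ (x + 2 * lam + 2) ^ 8 := by
  rw [← sub_nonneg]
  rcases hr with rfl | rfl <;> simp only [frobPoly] <;> field_simp <;> ring_nf <;> positivity

-- Turns a polynomial in `lam ∈ (-1/2, 0]` into a rational function of `z ∈ [0, ∞)`, so that its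
-- sign can be read off from the coefficients.
lemma exists_eq_neg_div_of_nonpos (hl : -(1 / 2) < lam) (hl' : lam ≤ 0) :
    ∃ z : ℝ, 0 ≤ z ∧ lam = -z / (2 * (1 + z)) := by
  have h : 0 < 2 * lam + 1 := by linarith
  refine ⟨-2 * lam / (2 * lam + 1), div_nonneg (by linarith) h.le, ?_⟩
  have hz : 1 + -2 * lam / (2 * lam + 1) = 1 / (2 * lam + 1) := by
    field_simp
    ring
  rw [hz, eq_div_iff (by positivity)]
  ring

lemma two_mul_neg_div_add_three {z : ℝ} (hz : 0 ≤ z) :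
    2 * (-z / (2 * (1 + z))) + 3 = (3 + 2 * z) / (1 + z) := by
  field_simp
  ring

lemma le_frobPoly_sub_of_nonpos (hl : -(1 / 2) < lam) (hl' : lam ≤ 0) (hr : r = 0 ∨ r = -1)
    (hx : r + 2 ≤ x) :
    (x + 2 * lam + 8) * x ^ 2 * (x + lam) ^ 2 * (x + 2 * lam) ^ 3 ≤
      frobPoly lam x - frobPoly lam r := by
  obtain ⟨w, hw, rfl⟩ := exists_nonneg_add_of_le hx
  obtain ⟨z, hz, rfl⟩ := exists_eq_neg_div_of_nonpos hl hl'
  rw [← sub_nonneg]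
  rcases hr with rfl | rfl <;> simp only [frobPoly, two_mul_neg_div_add_three hz] <;>
    field_simp <;> ring_nf <;> positivity

lemma frobPoly_sub_le_of_nonpos (hl : -(1 / 2) < lam) (hl' : lam ≤ 0) (hr : r = 0 ∨ r = -1)
    (hx : 0 ≤ x) :
    frobPoly lam x - frobPoly lam r ≤ (x + lam + 2) ^ 8 := by
  obtain ⟨z, hz, rfl⟩ := exists_eq_neg_div_of_nonpos hl hl'
  rw [← sub_nonneg]
  rcases hr with rfl | rfl <;> simp only [frobPoly, two_mul_neg_div_add_three hz] <;>
    field_simp <;> ring_nf <;> positivity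

end PolynomialBounds

theorem Bmat_frobenius_bounds (lam : ℝ) (n : ℕ) (hn : 1 ≤ n) :
    (0 ≤ lam →
      1/(4*(2*lam + 1)^2*(2*lam + 5)) *
          (((n : ℝ) + 8) * (n : ℝ)^3 * ((n : ℝ) + lam)^2 * ((n : ℝ) + 2*lam)^2)
        ≤ frobSq (Bmat lam n) ∧
      frobSq (Bmat lam n) ≤ 1/(4*(2*lam + 1)^2*(2*lam + 5)) * ((n : ℝ) + 2*lam + 2)^8) ∧
    (-(1/2 : ℝ) < lam → lam ≤ 0 →
      1/(4*(2*lam + 1)^2*(2*lam + 5)) *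
          (((n : ℝ) + 2*lam + 8) * (n : ℝ)^2 * ((n : ℝ) + lam)^2 * ((n : ℝ) + 2*lam)^3)
        ≤ frobSq (Bmat lam n) ∧
      frobSq (Bmat lam n) ≤ 1/(4*(2*lam + 1)^2*(2*lam + 5)) * ((n : ℝ) + lam + 2)^8) := by
  have hc (hl : -(1 / 2) < lam) : 0 ≤ 1 / (4 * (2 * lam + 1) ^ 2 * (2 * lam + 5)) := by
    have : 0 < 2 * lam + 5 := by linarith
    positivity
  have hr : -((n % 2 : ℕ) : ℝ) = 0 ∨ -((n % 2 : ℕ) : ℝ) = -1 := by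
    rcases Nat.mod_two_eq_zero_or_one n with h | h <;> simp [h]
  have hx : -((n % 2 : ℕ) : ℝ) + 2 ≤ n := by
    have : 2 ≤ n + n % 2 := by omega
    have : (2 : ℝ) ≤ n + (n % 2 : ℕ) := by exact_mod_cast this
    linarith
  refine ⟨fun hl => ?_, fun hl hl' => ?_⟩
  · have hl₀ : -(1 / 2) < lam := by linarith
    rw [frobSq_Bmat hl₀]
    exact ⟨mul_le_mul_of_nonneg_left (le_frobPoly_sub_of_nonneg hl hr hx) (hc hl₀),
      mul_le_mul_of_nonneg_left (frobPoly_sub_le_of_nonneg hl hr n.cast_nonneg) (hc hl₀)⟩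
  · rw [frobSq_Bmat hl]
    exact ⟨mul_le_mul_of_nonneg_left (le_frobPoly_sub_of_nonpos hl hl' hr hx) (hc hl),
      mul_le_mul_of_nonneg_left (frobPoly_sub_le_of_nonpos hl hl' hr n.cast_nonneg) (hc hl)⟩
end

section
/- Let λ be a real number with λ > 2, let n be a natural number with n ≥ 3, and set F(n,λ) = n(n+λ)(n+2λ)(n+3λ)/((λ+1)(λ+2)). Then (1/8)·F(n,λ) ≤ (c_n(λ))² ≤ F(n,λ). -/
open Polynomial Filter

/-- The weighted `L_2` norm with the Gegenbauer weight `w_lam(t) = (1-t^2)^(lam-1/2)`. -/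
noncomputable def gegNorm (lam : ℝ) (f : ℝ → ℝ) : ℝ :=
  (∫ x in (-1:ℝ)..1, (f x) ^ 2 * (1 - x ^ 2) ^ (lam - 1/2)) ^ ((1:ℝ)/2)

/-- The best Markov constant `c_n(lam)` in `‖p'‖ ≤ c_n(lam) ‖p‖` for polynomials of degree ≤ n. -/
noncomputable def markovConst (lam : ℝ) (n : ℕ) : ℝ :=
  sSup { r : ℝ | ∃ p : Polynomial ℝ, p ≠ 0 ∧ p.natDegree ≤ n ∧
    r = gegNorm lam (fun x => (Polynomial.derivative p).eval x) /
        gegNorm lam (fun x => p.eval x) }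

/-!
Let `⟨f, g⟩` be the inner product for the weight. The operator
`T p = (2 lam + 1) x p' - (1 - x ^ 2) p''` satisfies `⟨T p, q⟩ = ⟨(1 - x ^ 2) p', q'⟩`, and its
eigenvalue on the Gegenbauer polynomial of degree `k` is `k (k + 2 lam)`. Expanding `p` in
Gegenbauer polynomials bounds `⟨(1 - x ^ 2) p', p'⟩` by `n (n + 2 lam) ⟨p, p⟩`.

To remove the factor `1 - x ^ 2`, use Gauss quadrature at the zeros of the Gegenbauer polynomial
`y` of degree `n + 1`, where it is at least a positive constant: at a zero the differential
equation expresses `y''` and `y'''` through `y'`, and the Laguerre inequality for `y / (X - x)`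
becomes an upper bound for `x ^ 2`.

For the lower bound take the Gegenbauer polynomial of degree `n` with parameter `lam + 1`. Its
differential equation together with integration by parts evaluates the ratio of the two norms.
-/

theorem exists_eq_smul_add_of_natDegree_le {R : Type*} [CommRing R] [Nontrivial R] {p y : R[X]}
    (hy : y.Monic) (hp : p.natDegree ≤ y.natDegree) :
    ∃ (c : R) (r : R[X]), r.degree < y.degree ∧ p = c • y + r := by
  have hquot : (p /ₘ y).natDegree = 0 := by
    rw [natDegree_divByMonic p hy, Nat.sub_eq_zero_of_le hp]
  refine ⟨(p /ₘ y).coeff 0, p %ₘ y, degree_modByMonic_lt p hy, ?_⟩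
  rw [smul_eq_C_mul, ← eq_C_of_natDegree_eq_zero hquot, mul_comm, add_comm, modByMonic_add_div]

section RealRooted

theorem splits_of_forall_irreducible_dvd {K : Type*} [Field K] {f : K[X]}
    (h : ∀ g, Irreducible g → g ∣ f → g.degree = 1) : f.Splits := by
  rcases eq_or_ne f 0 with rfl | hf
  · exact Splits.zero
  obtain ⟨u, hu⟩ := UniqueFactorizationMonoid.factors_prod hf
  rw [← hu]
  exact (Splits.multisetProd fun g hg => Splits.of_degree_eq_one <|
    h g (UniqueFactorizationMonoid.irreducible_of_factor g hg)
      (UniqueFactorizationMonoid.dvd_of_mem_factors hg)).mul u.isUnit.splits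

theorem forall_eval_nonneg_or_forall_eval_nonpos {p : ℝ[X]} (hp : ∀ x, ¬ p.IsRoot x) :
    (∀ x, 0 ≤ p.eval x) ∨ ∀ x, p.eval x ≤ 0 := by
  by_contra! h
  obtain ⟨⟨a, ha⟩, b, hb⟩ := h
  obtain ⟨c, hc⟩ := mem_range_of_exists_le_of_exists_ge p.continuous ⟨a, ha.le⟩ ⟨b, hb.le⟩
  exact hp c hc

variable {R : Type*} [CommRing R] [LinearOrder R] [IsStrictOrderedRing R] {p : R[X]}

theorem laguerre_inequality (hp : p.Splits) (x : R) :
    p.eval x * (derivative (derivative p)).eval x ≤ (derivative p).eval x ^ 2 := by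
  induction hp using Submonoid.closure_induction with
  | mem q hq => rcases hq with ⟨c, rfl⟩ | ⟨c, rfl⟩ <;> simp
  | one => simp
  | mul p q _ _ hp hq =>
    simp only [derivative_mul, derivative_add, eval_mul, eval_add]
    nlinarith [mul_le_mul_of_nonneg_left hp (sq_nonneg (q.eval x)),
      mul_le_mul_of_nonneg_left hq (sq_nonneg (p.eval x))]

-- This is the Laguerre inequality for `q = p / (X - x)`: there, `q`, `q'`, `q''` take the values
-- `p'`, `p'' / 2`, `p''' / 3`.
theorem laguerre_inequality_at_root (hp : p.Splits) {x : R} (hx : p.IsRoot x) :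
    4 * ((derivative p).eval x * (derivative (derivative (derivative p))).eval x) ≤
      3 * (derivative (derivative p)).eval x ^ 2 := by
  obtain ⟨q, rfl⟩ := dvd_iff_isRoot.2 hx
  have hlag := laguerre_inequality (splits_X_sub_C_mul_iff.1 hp) x
  simp only [derivative_mul, derivative_add, derivative_sub, derivative_X, derivative_C,
    eval_add, eval_mul, eval_sub, eval_X, eval_C, sub_zero, sub_self, zero_mul, add_zero, one_mul]
  linarith

end RealRooted

/-- Positive definiteness of a linear functional `L` on real polynomials, such as integration
against a weight: `L` is positive on nonzero polynomials that are nonnegative on the real line. -/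
def IsPosDefFunctional (L : ℝ[X] →ₗ[ℝ] ℝ) : Prop :=
  ∀ ⦃p : ℝ[X]⦄, p ≠ 0 → (∀ x, 0 ≤ p.eval x) → 0 < L p

/-- `y` is the monic orthogonal polynomial of degree `y.natDegree` for the functional `L`. -/
structure IsMonicOrthogonal (L : ℝ[X] →ₗ[ℝ] ℝ) (y : ℝ[X]) : Prop where
  monic : y.Monic
  map_mul_eq_zero : ∀ ⦃p : ℝ[X]⦄, p.degree < y.degree → L (y * p) = 0

section OrthogonalPolynomials

variable {L : ℝ[X] →ₗ[ℝ] ℝ} {y : ℝ[X]}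

theorem IsPosDefFunctional.map_sq_pos (hL : IsPosDefFunctional L) {p : ℝ[X]} (hp : p ≠ 0) :
    0 < L (p ^ 2) :=
  hL (pow_ne_zero 2 hp) fun x => by rw [eval_pow]; positivity

theorem IsPosDefFunctional.map_sq_nonneg (hL : IsPosDefFunctional L) (p : ℝ[X]) :
    0 ≤ L (p ^ 2) := by
  rcases eq_or_ne p 0 with rfl | hp
  · simp
  · exact (hL.map_sq_pos hp).le

theorem IsMonicOrthogonal.map_smul_add_sq (hy : IsMonicOrthogonal L y) {r : ℝ[X]}
    (hr : r.degree < y.degree) (c : ℝ) :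
    L ((c • y + r) ^ 2) = c ^ 2 * L (y ^ 2) + L (r ^ 2) := by
  have hexpand : (c • y + r) ^ 2 = c ^ 2 • y ^ 2 + (2 * c) • (y * r) + r ^ 2 := by
    simp only [smul_eq_C_mul, C_mul, C_pow, C_ofNat]
    ring
  rw [hexpand, map_add, map_add, map_smul, map_smul, hy.map_mul_eq_zero hr, smul_zero, add_zero,
    smul_eq_mul]

theorem IsMonicOrthogonal.natDegree_eq_zero_of_dvd (hy : IsMonicOrthogonal L y)
    (hL : IsPosDefFunctional L) {a : ℝ[X]} (hay : a ∣ y) (ha : ∀ x, 0 ≤ a.eval x) :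
    a.natDegree = 0 := by
  obtain ⟨s, rfl⟩ := hay
  have hne := hy.monic.ne_zero
  have hs := right_ne_zero_of_mul hne
  by_contra hdeg
  have hlt : s.degree < (a * s).degree := by
    rw [degree_eq_natDegree hs, degree_eq_natDegree hne,
      natDegree_mul (left_ne_zero_of_mul hne) hs]
    exact_mod_cast (by omega : s.natDegree < a.natDegree + s.natDegree)
  refine (hL (mul_ne_zero hne hs) fun x => ?_).ne' (hy.map_mul_eq_zero hlt)
  rw [eval_mul, eval_mul, mul_assoc]
  exact mul_nonneg (ha x) (mul_self_nonneg _)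

theorem IsMonicOrthogonal.splits (hy : IsMonicOrthogonal L y) (hL : IsPosDefFunctional L) :
    y.Splits := by
  refine splits_of_forall_irreducible_dvd fun g hg hgy => ?_
  by_contra hdeg
  have hroot : ∀ x, ¬ g.IsRoot x := fun x hx =>
    hdeg (degree_eq_one_of_irreducible_of_root hg hx)
  have hpos := hg.natDegree_pos
  rcases forall_eval_nonneg_or_forall_eval_nonpos hroot with h | h
  · exact hpos.ne' (hy.natDegree_eq_zero_of_dvd hL hgy h)
  · rw [← natDegree_neg] at hpos
    exact hpos.ne' (hy.natDegree_eq_zero_of_dvd hL (neg_dvd.2 hgy) fun x => by simpa using h x)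

theorem IsMonicOrthogonal.separable (hy : IsMonicOrthogonal L y) (hL : IsPosDefFunctional L) :
    y.Separable := by
  refine PerfectField.separable_iff_squarefree.2 fun a ha => ?_
  have hdeg : (a * a).natDegree = 0 :=
    hy.natDegree_eq_zero_of_dvd hL ha fun x => eval_mul (R := ℝ) ▸ mul_self_nonneg _
  have ha0 : a ≠ 0 := left_ne_zero_of_mul (ne_zero_of_dvd_ne_zero hy.monic.ne_zero ha)
  rw [natDegree_mul ha0 ha0] at hdeg
  rw [isUnit_iff_degree_eq_zero, degree_eq_natDegree ha0]
  exact_mod_cast (by omega : a.natDegree = 0)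

theorem IsMonicOrthogonal.card_roots (hy : IsMonicOrthogonal L y) (hL : IsPosDefFunctional L) :
    y.roots.toFinset.card = y.natDegree := by
  rw [Multiset.toFinset_card_of_nodup (nodup_roots (hy.separable hL)),
    ← (hy.splits hL).natDegree_eq_card_roots]

/-- The weight (Christoffel number) at the node `x` of the Gauss quadrature rule for `L` whose
nodes are the roots of `y`. -/
noncomputable def gaussWeight (L : ℝ[X] →ₗ[ℝ] ℝ) (y : ℝ[X]) (x : ℝ) : ℝ :=
  L (Lagrange.basis y.roots.toFinset id x)

theorem IsMonicOrthogonal.map_modByMonic (hy : IsMonicOrthogonal L y) {f : ℝ[X]}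
    (hf : f.natDegree < 2 * y.natDegree) : L (f %ₘ y) = L f := by
  have hquot : (f /ₘ y).degree < y.degree := by
    refine degree_le_natDegree.trans_lt ?_
    rw [natDegree_divByMonic f hy.monic, degree_eq_natDegree hy.monic.ne_zero]
    exact_mod_cast (by omega : f.natDegree - y.natDegree < y.natDegree)
  conv_rhs => rw [← modByMonic_add_div f y, map_add, hy.map_mul_eq_zero hquot, add_zero]

theorem IsMonicOrthogonal.gauss_quadrature (hy : IsMonicOrthogonal L y)
    (hcard : y.roots.toFinset.card = y.natDegree) {f : ℝ[X]}
    (hf : f.natDegree < 2 * y.natDegree) :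
    L f = ∑ x ∈ y.roots.toFinset, f.eval x * gaussWeight L y x := by
  have hrem : (f %ₘ y).degree < (y.roots.toFinset.card : WithBot ℕ) := by
    rw [hcard, ← degree_eq_natDegree hy.monic.ne_zero]
    exact degree_modByMonic_lt f hy.monic
  rw [← hy.map_modByMonic hf, Lagrange.eq_interpolate Function.injective_id.injOn hrem,
    Lagrange.interpolate_apply, map_sum]
  refine Finset.sum_congr rfl fun x hx => ?_
  have hroot : y.IsRoot x := isRoot_of_mem_roots (Multiset.mem_toFinset.1 hx)
  have heval : (f %ₘ y).eval x = f.eval x := by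
    conv_rhs => rw [← modByMonic_add_div f y, eval_add, eval_mul, hroot.eq_zero, zero_mul, add_zero]
  rw [C_mul', map_smul, smul_eq_mul, gaussWeight, id, heval]

-- The rule is exact on the square of the Lagrange basis polynomial, so the weight is `L (ℓ_x ^ 2)`.
theorem IsMonicOrthogonal.gaussWeight_nonneg (hy : IsMonicOrthogonal L y)
    (hL : IsPosDefFunctional L) {x : ℝ} (hx : x ∈ y.roots.toFinset) :
    0 ≤ gaussWeight L y x := by
  have hcard := hy.card_roots hL
  set S := y.roots.toFinset
  have hinj : Set.InjOn (id : ℝ → ℝ) S := Function.injective_id.injOn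
  have hself : (Lagrange.basis S id x).eval x = 1 := Lagrange.eval_basis_self hinj hx
  have hdeg : (Lagrange.basis S id x ^ 2).natDegree < 2 * y.natDegree := by
    rw [natDegree_pow, Lagrange.natDegree_basis hinj hx, hcard]
    have := hcard ▸ Finset.card_pos.2 ⟨x, hx⟩
    omega
  have hsq : L (Lagrange.basis S id x ^ 2) = gaussWeight L y x := by
    rw [hy.gauss_quadrature hcard hdeg, Finset.sum_eq_single_of_mem x hx fun z hz hzx => ?_]
    · rw [eval_pow, hself, one_pow, one_mul]
    · have hother : (Lagrange.basis S id x).eval z = 0 :=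
        Lagrange.eval_basis_of_ne (v := (id : ℝ → ℝ)) hzx.symm hz
      rw [eval_pow, hother, zero_pow two_ne_zero, zero_mul]
  exact hsq ▸ hL.map_sq_nonneg _

theorem IsMonicOrthogonal.map_nonneg_of_eval_roots_nonneg (hy : IsMonicOrthogonal L y)
    (hL : IsPosDefFunctional L) {f : ℝ[X]} (hf : f.natDegree < 2 * y.natDegree)
    (hroots : ∀ x, y.IsRoot x → 0 ≤ f.eval x) : 0 ≤ L f := by
  rw [hy.gauss_quadrature (hy.card_roots hL) hf]
  exact Finset.sum_nonneg fun x hx => mul_nonneg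
    (hroots x (isRoot_of_mem_roots (Multiset.mem_toFinset.1 hx))) (hy.gaussWeight_nonneg hL hx)

end OrthogonalPolynomials

/-- The eigenvalue `k (k + 2 lam)` of `gegenbauerOp lam` on polynomials of degree `k`. -/
def gegenbauerEig (lam : ℝ) (k : ℕ) : ℝ :=
  k * (k + 2 * lam)

/-- The differential operator `p ↦ (2 lam + 1) x p' - (1 - x ^ 2) p''`, whose eigenvectors are the
Gegenbauer polynomials with parameter `lam`. -/
noncomputable def gegenbauerOp (lam : ℝ) : ℝ[X] →ₗ[ℝ] ℝ[X] :=
  (2 * lam + 1) • LinearMap.mulLeft ℝ X ∘ₗ derivative -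
    LinearMap.mulLeft ℝ (1 - X ^ 2) ∘ₗ derivative ∘ₗ derivative

section DifferentialOperator

theorem gegenbauerOp_apply (lam : ℝ) (p : ℝ[X]) :
    gegenbauerOp lam p =
      (2 * lam + 1) • (X * derivative p) - (1 - X ^ 2) * derivative (derivative p) :=
  rfl

theorem coeff_X_mul_derivative {R : Type*} [CommSemiring R] (p : R[X]) (m : ℕ) :
    (X * derivative p).coeff m = m * p.coeff m := by
  cases m with
  | zero => simp
  | succ m => rw [coeff_X_mul, coeff_derivative, Nat.cast_succ, mul_comm]

theorem coeff_gegenbauerOp (lam : ℝ) (p : ℝ[X]) (m : ℕ) :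
    (gegenbauerOp lam p).coeff m =
      gegenbauerEig lam m * p.coeff m - (m + 1) * (m + 2) * p.coeff (m + 2) := by
  -- In terms of the Euler operator `θ = x d/dx`, this is `θ² + 2 lam θ - d²/dx²`.
  have heuler : gegenbauerOp lam p = X * derivative (X * derivative p) +
      (2 * lam) • (X * derivative p) - derivative (derivative p) := by
    rw [gegenbauerOp_apply, derivative_mul, derivative_X, add_smul, one_smul]
    ring
  rw [heuler, coeff_sub, coeff_add, coeff_smul, coeff_X_mul_derivative, coeff_X_mul_derivative,
    coeff_derivative, coeff_derivative, gegenbauerEig, smul_eq_mul]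
  push_cast
  ring

theorem degree_gegenbauerOp_lt (lam : ℝ) {p : ℝ[X]} {k : ℕ} (hp : p.degree < k) :
    (gegenbauerOp lam p).degree < k := by
  rw [degree_lt_iff_coeff_zero] at hp ⊢
  intro m hm
  rw [coeff_gegenbauerOp, hp m hm, hp (m + 2) (by omega), mul_zero, mul_zero, sub_zero]

variable {lam : ℝ}

theorem gegenbauerEig_strictMono (hlam : -1 / 2 < lam) : StrictMono (gegenbauerEig lam) := by
  refine strictMono_nat_of_lt_succ fun k => ?_
  rw [gegenbauerEig, gegenbauerEig, Nat.cast_succ]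
  nlinarith [(k.cast_nonneg : (0 : ℝ) ≤ k)]

theorem gegenbauerEig_nonneg (hlam : -1 / 2 < lam) (n : ℕ) : 0 ≤ gegenbauerEig lam n := by
  have := (gegenbauerEig_strictMono hlam).monotone n.zero_le
  simpa [gegenbauerEig] using this

theorem eq_zero_of_gegenbauerOp_eq_smul (hlam : -1 / 2 < lam) {p : ℝ[X]} {k : ℕ}
    (hp : p.degree < k) (h : gegenbauerOp lam p = gegenbauerEig lam k • p) : p = 0 := by
  by_contra hp0
  have hdeg : p.natDegree < k := (natDegree_lt_iff_degree_lt hp0).2 hp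
  have hcoeff := congrArg (coeff · p.natDegree) h
  simp only [coeff_gegenbauerOp, coeff_smul, smul_eq_mul,
    coeff_eq_zero_of_natDegree_lt (by omega : p.natDegree < p.natDegree + 2), mul_zero,
    sub_zero, coeff_natDegree] at hcoeff
  exact (gegenbauerEig_strictMono hlam hdeg).ne
    (mul_right_cancel₀ (leadingCoeff_ne_zero.2 hp0) hcoeff)

theorem exists_gegenbauerOp_sub_smul_eq (hlam : -1 / 2 < lam) {k : ℕ} {g : ℝ[X]}
    (hg : g.degree < k) :
    ∃ r : ℝ[X], r.degree < k ∧ gegenbauerOp lam r - gegenbauerEig lam k • r = g := by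
  let T : ℝ[X] →ₗ[ℝ] ℝ[X] := gegenbauerOp lam - gegenbauerEig lam k • LinearMap.id
  have hT : ∀ p ∈ degreeLT ℝ k, T p ∈ degreeLT ℝ k := fun p hp =>
    Submodule.sub_mem _
      (mem_degreeLT.2 (degree_gegenbauerOp_lt lam (mem_degreeLT.1 hp)))
      (Submodule.smul_mem _ _ hp)
  have hinj : Function.Injective (T.restrict hT) := by
    refine (injective_iff_map_eq_zero _).2 fun r hr => Subtype.ext ?_
    exact eq_zero_of_gegenbauerOp_eq_smul hlam (mem_degreeLT.1 r.2)
      (sub_eq_zero.1 (congrArg Subtype.val hr))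
  obtain ⟨r, hr⟩ := LinearMap.injective_iff_surjective.1 hinj ⟨g, mem_degreeLT.2 hg⟩
  exact ⟨r, mem_degreeLT.1 r.2, congrArg Subtype.val hr⟩

theorem exists_monic_gegenbauerOp_eq_smul (hlam : -1 / 2 < lam) (k : ℕ) :
    ∃ y : ℝ[X], y.Monic ∧ y.natDegree = k ∧ gegenbauerOp lam y = gegenbauerEig lam k • y := by
  have hlow :
      (gegenbauerEig lam k • X ^ k - gegenbauerOp lam (X ^ k)).degree < (k : WithBot ℕ) := by
    rw [degree_lt_iff_coeff_zero]
    intro m hm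
    rw [coeff_sub, coeff_smul, coeff_gegenbauerOp, smul_eq_mul, coeff_X_pow, coeff_X_pow,
      if_neg (by omega : m + 2 ≠ k)]
    rcases eq_or_ne m k with rfl | hmk
    · simp
    · simp [hmk]
  obtain ⟨r, hr, hTr⟩ := exists_gegenbauerOp_sub_smul_eq hlam hlow
  refine ⟨X ^ k + r, monic_X_pow_add hr, natDegree_eq_of_degree_eq_some ?_, ?_⟩
  · rw [degree_add_eq_left_of_degree_lt (by rwa [degree_X_pow]), degree_X_pow]
  · rw [map_add, smul_add]
    linear_combination hTr

/-- The monic Gegenbauer polynomial of degree `k` with parameter `lam`. -/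
noncomputable def monicGegenbauer (hlam : -1 / 2 < lam) (k : ℕ) : ℝ[X] :=
  (exists_monic_gegenbauerOp_eq_smul hlam k).choose

theorem monic_monicGegenbauer (hlam : -1 / 2 < lam) (k : ℕ) : (monicGegenbauer hlam k).Monic :=
  (exists_monic_gegenbauerOp_eq_smul hlam k).choose_spec.1

theorem natDegree_monicGegenbauer (hlam : -1 / 2 < lam) (k : ℕ) :
    (monicGegenbauer hlam k).natDegree = k :=
  (exists_monic_gegenbauerOp_eq_smul hlam k).choose_spec.2.1

theorem degree_monicGegenbauer (hlam : -1 / 2 < lam) (k : ℕ) :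
    (monicGegenbauer hlam k).degree = k := by
  rw [degree_eq_natDegree (monic_monicGegenbauer hlam k).ne_zero, natDegree_monicGegenbauer]

theorem gegenbauerOp_monicGegenbauer (hlam : -1 / 2 < lam) (k : ℕ) :
    gegenbauerOp lam (monicGegenbauer hlam k) = gegenbauerEig lam k • monicGegenbauer hlam k :=
  (exists_monic_gegenbauerOp_eq_smul hlam k).choose_spec.2.2

section RootBound

variable {p : ℝ[X]} {μ x : ℝ}

theorem gegenbauer_ode (hp : gegenbauerOp lam p = μ • p) :
    (1 - X ^ 2) * derivative (derivative p) =
      (2 * lam + 1) • (X * derivative p) - μ • p := by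
  rw [← hp, gegenbauerOp_apply, sub_sub_cancel]

theorem gegenbauer_ode_eval (hp : gegenbauerOp lam p = μ • p) (x : ℝ) :
    (1 - x ^ 2) * (derivative (derivative p)).eval x =
      (2 * lam + 1) * x * (derivative p).eval x - μ * p.eval x := by
  simpa [mul_assoc] using congrArg (eval x) (gegenbauer_ode hp)

theorem gegenbauerOp_derivative (hp : gegenbauerOp lam p = μ • p) :
    gegenbauerOp (lam + 1) (derivative p) = (μ - (2 * lam + 1)) • derivative p := by
  have h := congrArg derivative hp
  simp only [gegenbauerOp_apply, derivative_sub, derivative_smul, derivative_mul, derivative_X,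
    derivative_one, derivative_pow] at h ⊢
  simp only [smul_eq_C_mul, C_add, C_mul, C_sub, Nat.cast_ofNat, C_ofNat, C_1] at h ⊢
  linear_combination h

theorem sq_mul_le_of_isRoot_of_gegenbauerOp_eq_smul (hp : gegenbauerOp lam p = μ • p)
    (hsplits : p.Splits) (hx : p.IsRoot x) (hx' : (derivative p).eval x ≠ 0) :
    (2 * lam + 1) * (2 * lam + 9) * x ^ 2 ≤ 4 * (μ - (2 * lam + 1)) * (1 - x ^ 2) := by
  have hsecond := gegenbauer_ode_eval hp x
  have hthird := gegenbauer_ode_eval (gegenbauerOp_derivative hp) x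
  have hlag := laguerre_inequality_at_root hsplits hx
  rw [hx.eq_zero, mul_zero, sub_zero] at hsecond
  set a := (derivative p).eval x
  set b := (derivative (derivative p)).eval x
  set c := (derivative (derivative (derivative p))).eval x
  refine le_of_mul_le_mul_left ?_ (by positivity : 0 < a ^ 2)
  have hleft : (1 - x ^ 2) ^ 2 * (4 * (a * c)) = a ^ 2 *
      (4 * (2 * lam + 3) * (2 * lam + 1) * x ^ 2 - 4 * (μ - (2 * lam + 1)) * (1 - x ^ 2)) := by
    linear_combination 4 * a * (1 - x ^ 2) * hthird + 4 * a * (2 * lam + 3) * x * hsecond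
  have hright : (1 - x ^ 2) ^ 2 * (3 * b ^ 2) = a ^ 2 * (3 * (2 * lam + 1) ^ 2 * x ^ 2) := by
    linear_combination 3 * ((1 - x ^ 2) * b + (2 * lam + 1) * x * a) * hsecond
  have := mul_le_mul_of_nonneg_left hlag (sq_nonneg (1 - x ^ 2))
  rw [hleft, hright] at this
  linarith

end RootBound

end DifferentialOperator

section GegenbauerFunctional

variable {lam : ℝ}

theorem intervalIntegrable_one_sub_sq_rpow {a : ℝ} (ha : -1 < a) :
    IntervalIntegrable (fun x : ℝ => (1 - x ^ 2) ^ a) MeasureTheory.volume (-1) 1 := by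
  have hright : IntervalIntegrable (fun x : ℝ => (1 - x ^ 2) ^ a) MeasureTheory.volume 0 1 := by
    have hsing : IntervalIntegrable (fun x : ℝ => (1 - x) ^ a) MeasureTheory.volume 0 1 := by
      simpa using (intervalIntegral.intervalIntegrable_rpow' (a := 1) (b := 0) ha).comp_sub_left 1
    have hcont : ContinuousOn (fun x : ℝ => (1 + x) ^ a) (Set.uIcc 0 1) := by
      rw [Set.uIcc_of_le zero_le_one]
      exact (by fun_prop : ContinuousOn (fun x : ℝ => 1 + x) _).rpow_const fun x hx =>
        Or.inl (by linarith [hx.1])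
    refine (hsing.mul_continuousOn hcont).congr fun x hx => ?_
    rw [Set.uIoc_of_le zero_le_one] at hx
    rw [← Real.mul_rpow (by linarith [hx.2]) (by linarith [hx.1])]
    ring_nf
  have hleft : IntervalIntegrable (fun x : ℝ => (1 - x ^ 2) ^ a) MeasureTheory.volume 0 (-1) := by
    simpa using (IntervalIntegrable.iff_comp_neg (by simp)).1 hright
  exact hleft.symm.trans hright

theorem intervalIntegrable_eval_mul_one_sub_sq_rpow (hlam : -1 / 2 < lam) (p : ℝ[X]) :
    IntervalIntegrable (fun x => p.eval x * (1 - x ^ 2) ^ (lam - 1 / 2))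
      MeasureTheory.volume (-1) 1 :=
  (intervalIntegrable_one_sub_sq_rpow (by linarith)).continuousOn_mul p.continuousOn

/-- Integration of polynomials over `[-1, 1]` against the Gegenbauer weight
`(1 - x ^ 2) ^ (lam - 1 / 2)`. -/
noncomputable def gegenbauerFunctional (hlam : -1 / 2 < lam) : ℝ[X] →ₗ[ℝ] ℝ where
  toFun p := ∫ x in (-1 : ℝ)..1, p.eval x * (1 - x ^ 2) ^ (lam - 1 / 2)
  map_add' p q := by
    simp only [eval_add, add_mul]
    exact intervalIntegral.integral_add (intervalIntegrable_eval_mul_one_sub_sq_rpow hlam p)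
      (intervalIntegrable_eval_mul_one_sub_sq_rpow hlam q)
  map_smul' c p := by
    simp only [eval_smul, smul_eq_mul, mul_assoc, intervalIntegral.integral_const_mul,
      RingHom.id_apply]

theorem gegenbauerFunctional_apply (hlam : -1 / 2 < lam) (p : ℝ[X]) :
    gegenbauerFunctional hlam p = ∫ x in (-1 : ℝ)..1, p.eval x * (1 - x ^ 2) ^ (lam - 1 / 2) :=
  rfl

theorem isPosDefFunctional_gegenbauerFunctional (hlam : -1 / 2 < lam) :
    IsPosDefFunctional (gegenbauerFunctional hlam) := by
  intro p hp hnonneg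
  rw [gegenbauerFunctional_apply, intervalIntegral.integral_pos_iff_support_of_nonneg_ae' ?_
    (intervalIntegrable_eval_mul_one_sub_sq_rpow hlam p)]
  · refine ⟨by norm_num, lt_of_lt_of_le ?_ (MeasureTheory.measure_mono
      (?_ : Set.Ioo (-1) 1 \ {x | p.IsRoot x} ⊆ _))⟩
    · rw [MeasureTheory.measure_sdiff_null ((finite_setOfPred_isRoot hp).measure_zero _),
        Real.volume_Ioo]
      norm_num
    · rintro x ⟨hx, hroot⟩
      have hweight : 0 < 1 - x ^ 2 := by nlinarith [hx.1, hx.2]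
      exact ⟨mul_ne_zero hroot (Real.rpow_pos_of_pos hweight _).ne', Set.Ioo_subset_Ioc_self hx⟩
  · refine (MeasureTheory.ae_restrict_iff' measurableSet_uIoc).2 (.of_forall fun x hx => ?_)
    rw [Set.uIoc_of_le (by norm_num)] at hx
    have hweight : 0 ≤ 1 - x ^ 2 := by nlinarith [hx.1, hx.2]
    exact mul_nonneg (hnonneg x) (Real.rpow_nonneg hweight _)

theorem gegenbauerFunctional_one_sub_sq_mul_derivative (hlam : -1 / 2 < lam) (p : ℝ[X]) :
    gegenbauerFunctional hlam ((1 - X ^ 2) * derivative p) =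
      (2 * lam + 1) * gegenbauerFunctional hlam (X * p) := by
  have hpos : 0 < lam + 1 / 2 := by linarith
  set q := (1 - X ^ 2) * derivative p - (2 * lam + 1) • (X * p) with hq
  have hderiv : ∀ x ∈ Set.Ioo (-1 : ℝ) 1, HasDerivAt
      (fun x => p.eval x * (1 - x ^ 2) ^ (lam + 1 / 2))
      (q.eval x * (1 - x ^ 2) ^ (lam - 1 / 2)) x := by
    intro x hx
    have hweight : 0 < 1 - x ^ 2 := by nlinarith [hx.1, hx.2]
    refine ((p.hasDerivAt x).mul (((hasDerivAt_pow 2 x).const_sub 1).rpow_const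
      (p := lam + 1 / 2) (Or.inl hweight.ne'))).congr_deriv ?_
    rw [show lam + 1 / 2 - 1 = lam - 1 / 2 by ring,
      show lam + 1 / 2 = lam - 1 / 2 + 1 by ring, Real.rpow_add_one hweight.ne']
    simp only [hq, eval_sub, eval_mul, eval_one, eval_pow, eval_X, eval_smul, smul_eq_mul]
    push_cast
    ring
  have hcont : ContinuousOn (fun x => p.eval x * (1 - x ^ 2) ^ (lam + 1 / 2))
      (Set.Icc (-1) 1) :=
    p.continuousOn.mul <|
      (by fun_prop : ContinuousOn (fun x : ℝ => 1 - x ^ 2) _).rpow_const fun _ _ => Or.inr hpos.le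
  have hzero : gegenbauerFunctional hlam q = 0 := by
    rw [gegenbauerFunctional_apply, intervalIntegral.integral_eq_sub_of_hasDerivAt_of_le
      (by norm_num) hcont hderiv (intervalIntegrable_eval_mul_one_sub_sq_rpow hlam q)]
    norm_num [Real.zero_rpow hpos.ne']
  rwa [hq, map_sub, map_smul, smul_eq_mul, sub_eq_zero] at hzero

theorem gegenbauerFunctional_gegenbauerOp_mul (hlam : -1 / 2 < lam) (p q : ℝ[X]) :
    gegenbauerFunctional hlam (gegenbauerOp lam p * q) =
      gegenbauerFunctional hlam ((1 - X ^ 2) * (derivative p * derivative q)) := by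
  have hsplit : gegenbauerOp lam p * q = (2 * lam + 1) • (X * (derivative p * q)) -
      (1 - X ^ 2) * derivative (derivative p * q) +
      (1 - X ^ 2) * (derivative p * derivative q) := by
    simp only [gegenbauerOp_apply, derivative_mul, smul_eq_C_mul]
    ring
  rw [hsplit, map_add, map_sub, map_smul, gegenbauerFunctional_one_sub_sq_mul_derivative,
    smul_eq_mul, sub_self, zero_add]

theorem isMonicOrthogonal_monicGegenbauer (hlam : -1 / 2 < lam) (k : ℕ) :
    IsMonicOrthogonal (gegenbauerFunctional hlam) (monicGegenbauer hlam k) where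
  monic := monic_monicGegenbauer hlam k
  map_mul_eq_zero p hp := by
    set y := monicGegenbauer hlam k with hy
    rw [degree_monicGegenbauer] at hp
    obtain ⟨r, -, rfl⟩ := exists_gegenbauerOp_sub_smul_eq hlam hp
    have hsymm : gegenbauerFunctional hlam (gegenbauerOp lam r * y) =
        gegenbauerFunctional hlam (gegenbauerOp lam y * r) := by
      rw [gegenbauerFunctional_gegenbauerOp_mul, gegenbauerFunctional_gegenbauerOp_mul,
        mul_comm (derivative r)]
    rw [hy, gegenbauerOp_monicGegenbauer, ← hy] at hsymm
    rw [mul_sub, map_sub, mul_comm, hsymm, smul_mul_assoc, mul_smul_comm, sub_self]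

end GegenbauerFunctional

section MarkovInequality

variable {lam : ℝ}

theorem gegenbauerFunctional_gegenbauerOp_mul_self_le (hlam : -1 / 2 < lam) {n : ℕ} {p : ℝ[X]}
    (hp : p.natDegree ≤ n) :
    gegenbauerFunctional hlam (gegenbauerOp lam p * p) ≤
      gegenbauerEig lam n * gegenbauerFunctional hlam (p ^ 2) := by
  induction n generalizing p with
  | zero =>
    rw [eq_C_of_natDegree_le_zero hp]
    simp [gegenbauerOp_apply, gegenbauerEig]
  | succ n ih =>
    set y := monicGegenbauer hlam (n + 1) with hy
    have horth : IsMonicOrthogonal (gegenbauerFunctional hlam) y :=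
      isMonicOrthogonal_monicGegenbauer hlam (n + 1)
    obtain ⟨c, r, hr, rfl⟩ := exists_eq_smul_add_of_natDegree_le horth.monic
      (hp.trans (natDegree_monicGegenbauer hlam (n + 1)).ge)
    have hTr : (gegenbauerOp lam r).degree < y.degree := by
      rw [hy, degree_monicGegenbauer] at hr ⊢
      exact degree_gegenbauerOp_lt lam hr
    have henergy : gegenbauerFunctional hlam (gegenbauerOp lam (c • y + r) * (c • y + r)) =
        gegenbauerEig lam (n + 1) * (c ^ 2 * gegenbauerFunctional hlam (y ^ 2)) +
          gegenbauerFunctional hlam (gegenbauerOp lam r * r) := by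
      have hexpand : gegenbauerOp lam (c • y + r) * (c • y + r) =
          gegenbauerEig lam (n + 1) • (c ^ 2 • y ^ 2 + c • (y * r)) +
            c • (y * gegenbauerOp lam r) + gegenbauerOp lam r * r := by
        rw [map_add, map_smul, hy, gegenbauerOp_monicGegenbauer, ← hy]
        simp only [smul_eq_C_mul, C_pow]
        ring
      rw [hexpand]
      simp only [map_add, map_smul, horth.map_mul_eq_zero hr, horth.map_mul_eq_zero hTr,
        smul_eq_mul, mul_zero, add_zero]
    have hrn : r.natDegree ≤ n := by
      rw [hy, degree_monicGegenbauer] at hr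
      exact natDegree_le_iff_degree_le.2 (Order.le_of_lt_succ hr)
    rw [henergy, horth.map_smul_add_sq hr, mul_add]
    gcongr
    exact (ih hrn).trans (mul_le_mul_of_nonneg_right
      (gegenbauerEig_strictMono hlam n.lt_succ_self).le
      ((isPosDefFunctional_gegenbauerFunctional hlam).map_sq_nonneg r))

theorem gegenbauerFunctional_one_sub_sq_mul_derivative_sq_le (hlam : -1 / 2 < lam) {n : ℕ}
    {p : ℝ[X]} (hp : p.natDegree ≤ n) :
    gegenbauerFunctional hlam ((1 - X ^ 2) * derivative p ^ 2) ≤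
      gegenbauerEig lam n * gegenbauerFunctional hlam (p ^ 2) := by
  rw [sq (derivative p), ← gegenbauerFunctional_gegenbauerOp_mul]
  exact gegenbauerFunctional_gegenbauerOp_mul_self_le hlam hp

theorem sq_mul_le_of_isRoot_monicGegenbauer (hlam : -1 / 2 < lam) {n : ℕ} {x : ℝ}
    (hx : (monicGegenbauer hlam (n + 1)).IsRoot x) :
    (2 * lam + 1) * (2 * lam + 9) * x ^ 2 ≤ 4 * gegenbauerEig (lam + 1) n * (1 - x ^ 2) := by
  have horth := isMonicOrthogonal_monicGegenbauer hlam (n + 1)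
  have hL := isPosDefFunctional_gegenbauerFunctional hlam
  have hsimple : (derivative (monicGegenbauer hlam (n + 1))).eval x ≠ 0 := by
    simpa using (horth.separable hL).eval₂_derivative_ne_zero (RingHom.id ℝ) hx
  have heig : gegenbauerEig lam (n + 1) - (2 * lam + 1) = gegenbauerEig (lam + 1) n := by
    simp only [gegenbauerEig]
    push_cast
    ring
  exact heig ▸ sq_mul_le_of_isRoot_of_gegenbauerOp_eq_smul
    (gegenbauerOp_monicGegenbauer hlam (n + 1)) (horth.splits hL) hx hsimple

theorem gegenbauerFunctional_sq_le (hlam : -1 / 2 < lam) {n : ℕ} {q : ℝ[X]}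
    (hq : q.natDegree < n) :
    (2 * lam + 1) * (2 * lam + 9) * gegenbauerFunctional hlam (q ^ 2) ≤
      ((2 * lam + 1) * (2 * lam + 9) + 4 * gegenbauerEig (lam + 1) n) *
        gegenbauerFunctional hlam ((1 - X ^ 2) * q ^ 2) := by
  set G := (2 * lam + 1) * (2 * lam + 9)
  set E := 4 * gegenbauerEig (lam + 1) n
  set f : ℝ[X] := (G + E) • ((1 - X ^ 2) * q ^ 2) - G • q ^ 2 with hf
  have hdeg : f.natDegree < 2 * (monicGegenbauer hlam (n + 1)).natDegree := by
    have hweight : (1 - X ^ 2 : ℝ[X]).natDegree ≤ 2 := by compute_degree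
    have hsq : (q ^ 2).natDegree ≤ 2 * (n - 1) := natDegree_pow_le_of_le 2 (by omega)
    have hf_le : f.natDegree ≤ 2 + 2 * (n - 1) := (natDegree_sub_le_of_le
      ((natDegree_smul_le _ _).trans (natDegree_mul_le_of_le hweight hsq))
      ((natDegree_smul_le _ _).trans (hsq.trans (Nat.le_add_left _ _)))).trans_eq (max_self _)
    rw [natDegree_monicGegenbauer]
    omega
  have hroots : ∀ x, (monicGegenbauer hlam (n + 1)).IsRoot x → 0 ≤ f.eval x := by
    intro x hx
    have heval : f.eval x = (E * (1 - x ^ 2) - G * x ^ 2) * q.eval x ^ 2 := by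
      simp only [hf, eval_sub, eval_smul, eval_mul, eval_pow, eval_one, eval_X, smul_eq_mul]
      ring
    rw [heval]
    exact mul_nonneg (sub_nonneg.2 (sq_mul_le_of_isRoot_monicGegenbauer hlam hx)) (sq_nonneg _)
  have hnonneg := (isMonicOrthogonal_monicGegenbauer hlam (n + 1)).map_nonneg_of_eval_roots_nonneg
    (isPosDefFunctional_gegenbauerFunctional hlam) hdeg hroots
  rwa [hf, map_sub, map_smul, map_smul, smul_eq_mul, smul_eq_mul, sub_nonneg] at hnonneg

theorem gegenbauerFunctional_derivative_sq_le (hlam : -1 / 2 < lam) {n : ℕ} {p : ℝ[X]}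
    (hp : p.natDegree ≤ n) :
    gegenbauerFunctional hlam (derivative p ^ 2) ≤
      gegenbauerEig lam n *
        (1 + 4 * gegenbauerEig (lam + 1) n / ((2 * lam + 1) * (2 * lam + 9))) *
          gegenbauerFunctional hlam (p ^ 2) := by
  rcases n.eq_zero_or_pos with rfl | hn
  · rw [eq_C_of_natDegree_le_zero hp]
    simp [gegenbauerEig]
  have hq : (derivative p).natDegree < n := by
    have := natDegree_derivative_le p
    omega
  set G := (2 * lam + 1) * (2 * lam + 9)
  have hG : 0 < G := mul_pos (by linarith) (by linarith)
  have hE := gegenbauerEig_nonneg (by linarith : -1 / 2 < lam + 1) n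
  refine le_of_mul_le_mul_left ?_ hG
  calc G * gegenbauerFunctional hlam (derivative p ^ 2)
      ≤ (G + 4 * gegenbauerEig (lam + 1) n) *
          gegenbauerFunctional hlam ((1 - X ^ 2) * derivative p ^ 2) :=
        gegenbauerFunctional_sq_le hlam hq
    _ ≤ (G + 4 * gegenbauerEig (lam + 1) n) *
          (gegenbauerEig lam n * gegenbauerFunctional hlam (p ^ 2)) :=
        mul_le_mul_of_nonneg_left
          (gegenbauerFunctional_one_sub_sq_mul_derivative_sq_le hlam hp) (by positivity)
    _ = G * (gegenbauerEig lam n * (1 + 4 * gegenbauerEig (lam + 1) n / G) *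
          gegenbauerFunctional hlam (p ^ 2)) := by
        field_simp

end MarkovInequality

section ExtremalRatio

variable {lam μ : ℝ} {y : ℝ[X]}

theorem gegenbauerFunctional_one_sub_sq_mul_derivative_sq_of_eigen (hlam : -1 / 2 < lam)
    (hy : gegenbauerOp (lam + 1) y = μ • y) :
    (2 * lam + 3) * gegenbauerFunctional hlam ((1 - X ^ 2) * derivative y ^ 2) =
      (2 * lam + 1) * μ * gegenbauerFunctional hlam (y ^ 2) := by
  -- In `hparts` the coefficients of `p` make all terms in `y * derivative y` cancel.
  set p := X * (1 - X ^ 2) * derivative y ^ 2 + μ • (X * y ^ 2) +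
    (2 * lam + 2) • ((1 - X ^ 2) * (y * derivative y)) with hp
  have hparts : (1 - X ^ 2) * derivative p = (2 * lam + 1) • (X * p) +
      (2 * lam + 3) • ((1 - X ^ 2) * derivative y ^ 2) - ((2 * lam + 1) * μ) • y ^ 2 := by
    have hode := gegenbauer_ode hy
    simp only [hp, derivative_add, derivative_sub, derivative_mul, derivative_smul, derivative_X,
      derivative_one, derivative_pow]
    simp only [smul_eq_C_mul, C_add, C_mul, Nat.cast_ofNat, C_ofNat, C_1] at hode ⊢
    linear_combination (1 - X ^ 2) * (2 * X * derivative y + (2 * C lam + 2) * y) * hode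
  have h := congrArg (gegenbauerFunctional hlam) hparts
  rw [gegenbauerFunctional_one_sub_sq_mul_derivative] at h
  simp only [map_add, map_sub, map_smul, smul_eq_mul] at h
  linarith

theorem gegenbauerFunctional_derivative_sq_add_of_eigen (hlam : -1 / 2 < lam)
    (hy : gegenbauerOp (lam + 1) y = μ • y) :
    (2 * lam + 5) * gegenbauerFunctional hlam (derivative y ^ 2) +
        (μ - 2 * lam - 4) * gegenbauerFunctional hlam ((1 - X ^ 2) * derivative y ^ 2) =
      μ ^ 2 * gegenbauerFunctional hlam (y ^ 2) := by
  set p := X * derivative y ^ 2 + μ • (y * derivative y) with hp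
  have hparts : (1 - X ^ 2) * derivative p = (2 * lam + 1) • (X * p) +
      (2 * lam + 5) • derivative y ^ 2 +
      (μ - 2 * lam - 4) • ((1 - X ^ 2) * derivative y ^ 2) - μ ^ 2 • y ^ 2 := by
    have hode := gegenbauer_ode hy
    simp only [hp, derivative_add, derivative_mul, derivative_smul, derivative_X, derivative_pow]
    simp only [smul_eq_C_mul, C_add, C_mul, C_sub, C_pow, Nat.cast_ofNat, C_ofNat, C_1] at hode ⊢
    linear_combination (2 * X * derivative y + C μ * y) * hode
  have h := congrArg (gegenbauerFunctional hlam) hparts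
  rw [gegenbauerFunctional_one_sub_sq_mul_derivative] at h
  simp only [map_add, map_sub, map_smul, smul_eq_mul] at h
  linarith

theorem gegenbauerFunctional_derivative_sq_of_eigen (hlam : -1 / 2 < lam)
    (hy : gegenbauerOp (lam + 1) y = μ • y) :
    (2 * lam + 3) * (2 * lam + 5) * gegenbauerFunctional hlam (derivative y ^ 2) =
      2 * μ * (μ + (lam + 2) * (2 * lam + 1)) * gegenbauerFunctional hlam (y ^ 2) := by
  linear_combination
    (2 * lam + 3) * gegenbauerFunctional_derivative_sq_add_of_eigen hlam hy -
      (μ - 2 * lam - 4) * gegenbauerFunctional_one_sub_sq_mul_derivative_sq_of_eigen hlam hy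

end ExtremalRatio

section MarkovConstant

variable {lam : ℝ} {n : ℕ}

theorem gegNorm_eval (hlam : -1 / 2 < lam) (p : ℝ[X]) :
    gegNorm lam (fun x => p.eval x) = √(gegenbauerFunctional hlam (p ^ 2)) := by
  simp only [gegNorm, gegenbauerFunctional_apply, eval_pow, Real.sqrt_eq_rpow]

theorem gegNorm_derivative_div_gegNorm (hlam : -1 / 2 < lam) (p : ℝ[X]) :
    gegNorm lam (fun x => (derivative p).eval x) / gegNorm lam (fun x => p.eval x) =
      √(gegenbauerFunctional hlam (derivative p ^ 2) / gegenbauerFunctional hlam (p ^ 2)) := by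
  rw [gegNorm_eval hlam, gegNorm_eval hlam,
    Real.sqrt_div ((isPosDefFunctional_gegenbauerFunctional hlam).map_sq_nonneg _)]

theorem gegNorm_derivative_div_gegNorm_le (hlam : -1 / 2 < lam) {p : ℝ[X]} (hp : p.natDegree ≤ n)
    (hp0 : p ≠ 0) :
    gegNorm lam (fun x => (derivative p).eval x) / gegNorm lam (fun x => p.eval x) ≤
      √(gegenbauerEig lam n *
        (1 + 4 * gegenbauerEig (lam + 1) n / ((2 * lam + 1) * (2 * lam + 9)))) := by
  rw [gegNorm_derivative_div_gegNorm hlam]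
  exact Real.sqrt_le_sqrt <|
    (div_le_iff₀ ((isPosDefFunctional_gegenbauerFunctional hlam).map_sq_pos hp0)).2
      (gegenbauerFunctional_derivative_sq_le hlam hp)

theorem markovConst_sq_le (hlam : -1 / 2 < lam) (n : ℕ) :
    markovConst lam n ^ 2 ≤ gegenbauerEig lam n *
      (1 + 4 * gegenbauerEig (lam + 1) n / ((2 * lam + 1) * (2 * lam + 9))) := by
  have hG : 0 < (2 * lam + 1) * (2 * lam + 9) := mul_pos (by linarith) (by linarith)
  have h0 := gegenbauerEig_nonneg hlam n
  have h1 := gegenbauerEig_nonneg (by linarith : -1 / 2 < lam + 1) n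
  have hnonneg : 0 ≤ markovConst lam n := Real.sSup_nonneg <| by
    rintro _ ⟨p, -, -, rfl⟩
    rw [gegNorm_derivative_div_gegNorm hlam]
    exact Real.sqrt_nonneg _
  refine (Real.le_sqrt hnonneg (by positivity)).1 (Real.sSup_le ?_ (Real.sqrt_nonneg _))
  rintro _ ⟨p, hp0, hp, rfl⟩
  exact gegNorm_derivative_div_gegNorm_le hlam hp hp0

theorem le_markovConst_sq (hlam : -1 / 2 < lam) (n : ℕ) :
    2 * gegenbauerEig (lam + 1) n * (gegenbauerEig (lam + 1) n + (lam + 2) * (2 * lam + 1)) /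
        ((2 * lam + 3) * (2 * lam + 5)) ≤ markovConst lam n ^ 2 := by
  have hlam' : -1 / 2 < lam + 1 := by linarith
  set y := monicGegenbauer hlam' n
  have hy0 : y ≠ 0 := (monic_monicGegenbauer hlam' n).ne_zero
  have hbdd : BddAbove {r : ℝ | ∃ p : ℝ[X], p ≠ 0 ∧ p.natDegree ≤ n ∧
      r = gegNorm lam (fun x => (derivative p).eval x) / gegNorm lam (fun x => p.eval x)} := by
    refine ⟨√(gegenbauerEig lam n *
      (1 + 4 * gegenbauerEig (lam + 1) n / ((2 * lam + 1) * (2 * lam + 9)))), ?_⟩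
    rintro _ ⟨p, hp0, hp, rfl⟩
    exact gegNorm_derivative_div_gegNorm_le hlam hp hp0
  have hle := le_csSup hbdd ⟨y, hy0, (natDegree_monicGegenbauer hlam' n).le, rfl⟩
  rw [gegNorm_derivative_div_gegNorm hlam] at hle
  have hy := (isPosDefFunctional_gegenbauerFunctional hlam).map_sq_pos hy0
  have hratio := gegenbauerFunctional_derivative_sq_of_eigen hlam
    (gegenbauerOp_monicGegenbauer hlam' n)
  refine Eq.trans_le ?_ (Real.sqrt_le_iff.1 hle).2
  rw [div_eq_div_iff (mul_pos (by linarith) (by linarith)).ne' hy.ne']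
  linarith

end MarkovConstant

section ElementaryBounds

variable {lam : ℝ}

theorem one_eighth_mul_le_gegenbauerEig_ratio (hlam : 0 ≤ lam) (n : ℕ) :
    1 / 8 * ((n : ℝ) * (n + lam) * (n + 2 * lam) * (n + 3 * lam) / ((lam + 1) * (lam + 2))) ≤
      2 * gegenbauerEig (lam + 1) n * (gegenbauerEig (lam + 1) n + (lam + 2) * (2 * lam + 1)) /
        ((2 * lam + 3) * (2 * lam + 5)) := by
  rw [← mul_div_assoc, div_le_div_iff₀ (by positivity) (by positivity), ← sub_nonneg, gegenbauerEig]
  ring_nf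
  positivity

theorem gegenbauerEig_mul_one_add_le (hlam : 3 / 2 ≤ lam) (n : ℕ) :
    gegenbauerEig lam n *
        (1 + 4 * gegenbauerEig (lam + 1) n / ((2 * lam + 1) * (2 * lam + 9))) ≤
      (n : ℝ) * (n + lam) * (n + 2 * lam) * (n + 3 * lam) / ((lam + 1) * (lam + 2)) := by
  rcases n.eq_zero_or_pos with rfl | hn
  · simp [gegenbauerEig]
  have hm : (1 : ℝ) ≤ n := by exact_mod_cast hn
  simp only [gegenbauerEig]
  generalize (n : ℝ) = m at hm ⊢
  have hG : 0 < (2 * lam + 1) * (2 * lam + 9) := by positivity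
  have hkey : (lam + 1) * (lam + 2) *
      ((2 * lam + 1) * (2 * lam + 9) + 4 * (m * (m + 2 * (lam + 1)))) ≤
        (2 * lam + 1) * (2 * lam + 9) * ((m + lam) * (m + 3 * lam)) := by
    -- The difference has nonnegative coefficients as a polynomial in `m - 1` and `lam - 3 / 2`.
    obtain ⟨s, rfl⟩ : ∃ s, m = 1 + s := ⟨m - 1, by ring⟩
    obtain ⟨t, rfl⟩ : ∃ t, lam = 3 / 2 + t := ⟨lam - 3 / 2, by ring⟩
    have hs : 0 ≤ s := by linarith
    have ht : 0 ≤ t := by linarith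
    rw [← sub_nonneg]
    ring_nf
    positivity
  rw [one_add_div hG.ne', mul_div_assoc', div_le_div_iff₀ hG (by positivity)]
  have := mul_le_mul_of_nonneg_left hkey (by positivity : 0 ≤ m * (m + 2 * lam))
  linarith

end ElementaryBounds

theorem markov_two_sided_F_general (lam : ℝ) (hlam : 3 / 2 ≤ lam) (n : ℕ) :
    1/8 * ((n : ℝ) * ((n : ℝ) + lam) * ((n : ℝ) + 2*lam) * ((n : ℝ) + 3*lam) /
        ((lam + 1) * (lam + 2)))
      ≤ (markovConst lam n)^2 ∧
    (markovConst lam n)^2 ≤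
      (n : ℝ) * ((n : ℝ) + lam) * ((n : ℝ) + 2*lam) * ((n : ℝ) + 3*lam) /
        ((lam + 1) * (lam + 2)) :=
  ⟨(one_eighth_mul_le_gegenbauerEig_ratio (by linarith) n).trans
      (le_markovConst_sq (by linarith) n),
    (markovConst_sq_le (by linarith) n).trans (gegenbauerEig_mul_one_add_le hlam n)⟩

theorem markov_two_sided_F (lam : ℝ) (hlam : 2 < lam) (n : ℕ) (hn : 3 ≤ n) :
    1/8 * ((n : ℝ) * ((n : ℝ) + lam) * ((n : ℝ) + 2*lam) * ((n : ℝ) + 3*lam) /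
        ((lam + 1) * (lam + 2)))
      ≤ (markovConst lam n)^2 ∧
    (markovConst lam n)^2 ≤
      (n : ℝ) * ((n : ℝ) + lam) * ((n : ℝ) + 2*lam) * ((n : ℝ) + 3*lam) /
        ((lam + 1) * (lam + 2)) :=
  markov_two_sided_F_general lam (by linarith) n
end
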